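/- Fubini for series, inner representation: Let (Γ, μ) and (Γ', ν) be σ-finite measure spaces and φ : Γ × Γ' → ℂ[X, X⁻¹] a map such that for every m ∈ ℤ the function (x, x') ↦ coeff_m(φ(x, x')) is measurable on the product. Let z ∈ ℂ \ {0} and assume: (a) ∫_{Γ×Γ'} |coeff_m(φ(x, x'))| d(μ×ν) < ∞ for all m ∈ ℤ; (b) Σ_{m∈ℤ} |z|^m ∫_{Γ×Γ'} |coeff_m(φ(x, x'))| d(μ×ν) < ∞; (c) ∫_{Γ×Γ'} |ev_z(φ(x, x'))| d(μ×ν) < ∞. Let x ∈ Γ be a point for which there exists a measurable set N ⊆ Γ with x ∈ N, 0 < μ(N) < ∞, and φ(n, x') = φ(x, x') for all n ∈ N and all x' ∈ Γ'. Then: (i) ∫_{Γ'} |coeff_m(φ(x, x'))| dν(x') < ∞ for every m ∈ ℤ; (ii) Σ_{m∈ℤ} |z|^m ∫_{Γ'} |coeff_m(φ(x, x'))| dν(x') < ∞; (iii) ∫_{Γ'} |ev_z(φ(x, x'))| dν(x') < ∞; (iv) Σ_{m∈ℤ} z^m ∫_{Γ'} coeff_m(φ(x, x')) dν(x') = ∫_{Γ'}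 ev_z(φ(x, x')) dν(x'). -/

import Mathlib

open MeasureTheory

/-- Evaluation of a Laurent polynomial `p ∈ ℂ[X, X⁻¹]` (modelled as `ℤ →₀ ℂ`)
at a nonzero complex number `z`: `ev_z(p) = Σ_m coeff_m(p) z^m` (a finite sum). -/
noncomputable def evz (z : ℂ) (p : ℤ →₀ ℂ) : ℂ :=
  p.sum fun m a => a * z ^ m

/-!
Writing `ev_z(ψ) = ∑ m, z ^ m * coeff_m(ψ)`, strong convergence says that the integrals of the norms
of the summands are summable, so dominated convergence integrates the sum term by term. On a
product, Tonelli shows that strong convergence passes to almost every section. A section that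
agrees with a non-null set of others therefore agrees with a strongly convergent one.
-/

section SeriesOfIntegrableFunctions

variable {α β ι E : Type*} [MeasurableSpace α] [MeasurableSpace β]
  [NormedAddCommGroup E] {μ : Measure α} {ν : Measure β}

theorem tsum_eLpNorm_one_ne_top_of_summable_integral_norm {F : ι → α → E}
    (hF_int : ∀ i, Integrable (F i) μ) (hF_sum : Summable fun i => ∫ a, ‖F i a‖ ∂μ) :
    ∑' i, eLpNorm (F i) 1 μ ≠ ⊤ := by
  simp_rw [eLpNorm_one_eq_lintegral_enorm, ← ofReal_integral_norm_eq_lintegral_enorm (hF_int _)]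
  exact hF_sum.tsum_ofReal_ne_top

variable [Countable ι]

theorem ae_summable_norm_of_summable_integral_norm {F : ι → α → E}
    (hF_int : ∀ i, Integrable (F i) μ) (hF_sum : Summable fun i => ∫ a, ‖F i a‖ ∂μ) :
    ∀ᵐ a ∂μ, Summable fun i => ‖F i a‖ :=
  summable_norm_of_tsum_eLpNorm_ne_top le_rfl (fun i => (hF_int i).aestronglyMeasurable)
    (tsum_eLpNorm_one_ne_top_of_summable_integral_norm hF_int hF_sum)

theorem integrable_of_hasSum_of_summable_integral_norm {F : ι → α → E} {f : α → E}
    (hF_int : ∀ i, Integrable (F i) μ) (hF_sum : Summable fun i => ∫ a, ‖F i a‖ ∂μ)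
    (hf : ∀ᵐ a ∂μ, HasSum (fun i => F i a) (f a)) : Integrable f μ := by
  have hf_meas : AEStronglyMeasurable f μ :=
    aestronglyMeasurable_of_tendsto_ae Filter.atTop
      (fun s => Finset.aestronglyMeasurable_fun_sum s fun i _ => (hF_int i).aestronglyMeasurable) hf
  refine ⟨hf_meas, ?_⟩
  calc ∫⁻ a, ‖f a‖ₑ ∂μ
      ≤ ∫⁻ a, ∑' i, ‖F i a‖ₑ ∂μ := lintegral_mono_ae <| by
        filter_upwards [hf] with a ha
        rw [← ha.tsum_eq]
        exact enorm_tsum_le_tsum_enorm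
    _ = ∑' i, eLpNorm (F i) 1 μ := by
        rw [lintegral_tsum fun i => (hF_int i).aestronglyMeasurable.enorm]
        simp_rw [eLpNorm_one_eq_lintegral_enorm]
    _ < ⊤ := (tsum_eLpNorm_one_ne_top_of_summable_integral_norm hF_int hF_sum).lt_top

theorem ae_summable_integral_norm_section [SFinite μ] [SFinite ν] {F : ι → α × β → E}
    (hF_int : ∀ i, Integrable (F i) (μ.prod ν))
    (hF_sum : Summable fun i => ∫ p, ‖F i p‖ ∂(μ.prod ν)) :
    ∀ᵐ a ∂μ, Summable fun i => ∫ b, ‖F i (a, b)‖ ∂ν := by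
  have norm_section (i : ι) (a : α) : ‖∫ b, ‖F i (a, b)‖ ∂ν‖ = ∫ b, ‖F i (a, b)‖ ∂ν :=
    Real.norm_of_nonneg (integral_nonneg fun _ => norm_nonneg _)
  have tonelli (i : ι) : ∫ p, ‖F i p‖ ∂(μ.prod ν) = ∫ a, ‖∫ b, ‖F i (a, b)‖ ∂ν‖ ∂μ := by
    simp_rw [norm_section, integral_prod _ (hF_int i).norm]
  simp_rw [tonelli] at hF_sum
  simpa only [norm_section] using ae_summable_norm_of_summable_integral_norm
    (fun i => (hF_int i).integral_norm_prod_left) hF_sum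

end SeriesOfIntegrableFunctions

theorem hasSum_evz (z : ℂ) (p : ℤ →₀ ℂ) : HasSum (fun m => z ^ m * p m) (evz z p) := by
  simp only [evz, Finsupp.sum, mul_comm (p _)]
  refine hasSum_sum_of_ne_finset_zero fun m hm => ?_
  rw [Finsupp.notMem_support_iff.1 hm, mul_zero]

/-- The series `Σ_ψ` of a map `ψ` from a measure space to `ℂ[X, X⁻¹]` is defined and strongly
convergent at `z`. The evaluation points `ℂ \ {0}` are encoded as the units of `ℂ`. -/
structure StronglyConvergentAt {α : Type*} [MeasurableSpace α] (μ : Measure α)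
    (ψ : α → ℤ →₀ ℂ) (z : ℂˣ) : Prop where
  integrable_coeff : ∀ m, Integrable (fun a => ψ a m) μ
  summable_norm : Summable fun m : ℤ => ‖(z : ℂ)‖ ^ m * ∫ a, ‖ψ a m‖ ∂μ

/-- The series `Σ_ψ` is strongly convergent at `z` and represents the integral of `ev_z ∘ ψ`:
this function is integrable and its integral is the value of the series at `z`. -/
structure RepresentsIntegralAt {α : Type*} [MeasurableSpace α] (μ : Measure α)
    (ψ : α → ℤ →₀ ℂ) (z : ℂˣ) : Prop extends StronglyConvergentAt μ ψ z where
  integrable_evz : Integrable (fun a => evz z (ψ a)) μ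
  tsum_eq_integral : ∑' m : ℤ, (z : ℂ) ^ m * ∫ a, ψ a m ∂μ = ∫ a, evz z (ψ a) ∂μ

namespace StronglyConvergentAt

variable {α β : Type*} [MeasurableSpace α] [MeasurableSpace β] {μ : Measure α} {ν : Measure β}
  {z : ℂˣ}

theorem integrable_term {ψ : α → ℤ →₀ ℂ} (h : StronglyConvergentAt μ ψ z) (m : ℤ) :
    Integrable (fun a => (z : ℂ) ^ m * ψ a m) μ :=
  (h.integrable_coeff m).const_mul _

theorem summable_integral_norm_term {ψ : α → ℤ →₀ ℂ} (h : StronglyConvergentAt μ ψ z) :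
    Summable fun m : ℤ => ∫ a, ‖(z : ℂ) ^ m * ψ a m‖ ∂μ := by
  simpa only [norm_mul, norm_zpow, integral_const_mul] using h.summable_norm

theorem representsIntegralAt {ψ : α → ℤ →₀ ℂ} (h : StronglyConvergentAt μ ψ z) :
    RepresentsIntegralAt μ ψ z where
  toStronglyConvergentAt := h
  integrable_evz := integrable_of_hasSum_of_summable_integral_norm h.integrable_term
    h.summable_integral_norm_term (.of_forall fun a => hasSum_evz z (ψ a))
  tsum_eq_integral := by
    simpa only [integral_const_mul, (hasSum_evz _ _).tsum_eq] using
      integral_tsum_of_summable_integral_norm h.integrable_term h.summable_integral_norm_term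

theorem congr_ae {ψ ψ' : α → ℤ →₀ ℂ} (h : StronglyConvergentAt μ ψ z) (hψ : ψ =ᵐ[μ] ψ') :
    StronglyConvergentAt μ ψ' z where
  integrable_coeff m := (h.integrable_coeff m).congr (hψ.fun_comp fun p => p m)
  summable_norm := by
    have integral_norm_eq (m : ℤ) : ∫ a, ‖ψ a m‖ ∂μ = ∫ a, ‖ψ' a m‖ ∂μ :=
      integral_congr_ae (hψ.fun_comp fun p => ‖p m‖)
    simpa only [integral_norm_eq] using h.summable_norm

theorem ae_section [SFinite μ] [SFinite ν] {φ : α × β → ℤ →₀ ℂ}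
    (h : StronglyConvergentAt (μ.prod ν) φ z) :
    ∀ᵐ a ∂μ, StronglyConvergentAt ν (fun b => φ (a, b)) z := by
  have integrable_section : ∀ᵐ a ∂μ, ∀ m, Integrable (fun b => φ (a, b) m) ν :=
    ae_all_iff.2 fun m => (h.integrable_coeff m).prod_right_ae
  filter_upwards [integrable_section,
    ae_summable_integral_norm_section h.integrable_term h.summable_integral_norm_term]
    with a h_int h_sum
  exact ⟨h_int, by simpa only [norm_mul, norm_zpow, integral_const_mul] using h_sum⟩

end StronglyConvergentAt

theorem series_fubini_inner_general {α β : Type*} [MeasurableSpace α] [MeasurableSpace β]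
    {μ : Measure α} {ν : Measure β} [SFinite μ] [SFinite ν]
    {φ : α × β → ℤ →₀ ℂ} {z : ℂˣ}
    (h : StronglyConvergentAt (μ.prod ν) φ z) {a : α}
    (ha : ∃ᵐ a' ∂μ, ∀ᵐ b ∂ν, φ (a', b) = φ (a, b)) :
    RepresentsIntegralAt ν (fun b => φ (a, b)) z := by
  obtain ⟨a', h_eq, h_section⟩ := (ha.and_eventually h.ae_section).exists
  exact (h_section.congr_ae h_eq).representsIntegralAt

/-- Fubini for series, inner representation: if the coefficient series of
`φ : Γ × Γ' → ℂ[X, X⁻¹]` is defined, strongly convergent at `z ≠ 0`, and `ev_z ∘ φ` is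
integrable on the product, then at every point `x ∈ Γ` at which `φ` is "smooth"
(constant in the first variable, simultaneously in the second, on a set of finite positive
measure containing `x`), the inner series `Σ_{φ(x,·)}` is defined, strongly convergent at
`z`, and represents the inner integral `∫_{Γ'} ev_z(φ(x, x')) dν`. -/
theorem series_fubini_inner
    {Γ Γ' : Type*} [MeasurableSpace Γ] [MeasurableSpace Γ']
    (μ : Measure Γ) (ν : Measure Γ') [SigmaFinite μ] [SigmaFinite ν]
    (φ : Γ × Γ' → ℤ →₀ ℂ)
    (hmeas : ∀ m : ℤ, Measurable fun p : Γ × Γ' => φ p m)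
    (z : ℂ) (hz : z ≠ 0)
    (hcoeff : ∀ m : ℤ, Integrable (fun p : Γ × Γ' => φ p m) (μ.prod ν))
    (hstrong : Summable fun m : ℤ => ‖z‖ ^ m * ∫ p, ‖φ p m‖ ∂(μ.prod ν))
    (hint : Integrable (fun p : Γ × Γ' => evz z (φ p)) (μ.prod ν))
    (x : Γ) (N : Set Γ) (hNmeas : MeasurableSet N) (hxN : x ∈ N)
    (hNpos : 0 < μ N) (hNfin : μ N < ⊤)
    (hconst : ∀ n ∈ N, ∀ x' : Γ', φ (n, x') = φ (x, x')) :
    (∀ m : ℤ, Integrable (fun x' => φ (x, x') m) ν) ∧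
    (Summable fun m : ℤ => ‖z‖ ^ m * ∫ x', ‖φ (x, x') m‖ ∂ν) ∧
    Integrable (fun x' => evz z (φ (x, x'))) ν ∧
    ∑' m : ℤ, z ^ m * ∫ x', φ (x, x') m ∂ν = ∫ x', evz z (φ (x, x')) ∂ν := by
  have hx_smooth : ∃ᵐ n ∂μ, ∀ᵐ x' ∂ν, φ (n, x') = φ (x, x') :=
    (frequently_ae_mem_iff.2 hNpos.ne').mono fun n hn => .of_forall (hconst n hn)
  obtain ⟨⟨h_int, h_sum⟩, h_evz, h_eq⟩ :=
    series_fubini_inner_general (z := Units.mk0 z hz) ⟨hcoeff, hstrong⟩ hx_smooth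
  exact ⟨h_int, h_sum, h_evz, h_eq⟩
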